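/- arXiv:2503.16014 — 2 statements merged into one kernel-verified Lean document; each statement's English description precedes it below -/
import Mathlib

section
/- Under the causal model G1, fix a time index t with 2 ≤ t ≤ T and an intervention value x*. Let C range over configurations c = (v_t, w_t, z_{t−1}, S_{t−1}). Assuming that P(x_t = x*, c) > 0 for every configuration c with P(c) > 0, the interventional marginal satisfies P(y_t = y | do(x_t = x*)) = Σ_c P(y_t = y | x_t = x*, c) P(c) = Σ_c Σ_{z_t} b_t(y | z_t, x*, v_t, y_{t−1}) a_t(z_t | x*, w_t, z_{t−1}, y_{t−1}) P(c), for every value y. -/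
open Finset

/-- A trajectory of the six processes (u, x, v, w, z, y) over times 1..T; index 0 of
`Fin (T+1)` is a dummy time whose value is pinned to `default` by the joint pmf. -/
structure Traj (U X V W Z Y : Type) (T : ℕ) where
  u : Fin (T + 1) → U
  x : Fin (T + 1) → X
  v : Fin (T + 1) → V
  w : Fin (T + 1) → W
  z : Fin (T + 1) → Z
  y : Fin (T + 1) → Y

/-- Trajectories are equivalent to a finite product of function types. -/
def trajEquiv (U X V W Z Y : Type) (T : ℕ) :
    Traj U X V W Z Y T ≃
      (Fin (T + 1) → U) × (Fin (T + 1) → X) × (Fin (T + 1) → V) × (Fin (T + 1) → W) ×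
        (Fin (T + 1) → Z) × (Fin (T + 1) → Y) where
  toFun τ := (τ.u, τ.x, τ.v, τ.w, τ.z, τ.y)
  invFun p := ⟨p.1, p.2.1, p.2.2.1, p.2.2.2.1, p.2.2.2.2.1, p.2.2.2.2.2⟩
  left_inv τ := rfl
  right_inv p := rfl

instance {U X V W Z Y : Type} {T : ℕ}
    [Fintype U] [Fintype X] [Fintype V] [Fintype W] [Fintype Z] [Fintype Y]
    [DecidableEq U] [DecidableEq X] [DecidableEq V] [DecidableEq W] [DecidableEq Z]
    [DecidableEq Y] : Fintype (Traj U X V W Z Y T) :=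
  Fintype.ofEquiv _ (trajEquiv U X V W Z Y T).symm

instance {U X V W Z Y : Type} {T : ℕ}
    [DecidableEq U] [DecidableEq X] [DecidableEq V] [DecidableEq W] [DecidableEq Z]
    [DecidableEq Y] : DecidableEq (Traj U X V W Z Y T) := fun a b =>
  decidable_of_iff
    (a.u = b.u ∧ a.x = b.x ∧ a.v = b.v ∧ a.w = b.w ∧ a.z = b.z ∧ a.y = b.y)
    (by cases a; cases b; simp)

/-- Time index t as an element of `Fin (T+1)` (defined for all naturals via truncation;
only used for t ≤ T). -/
def idx (T t : ℕ) : Fin (T + 1) := ⟨min t T, Nat.lt_succ_of_le (min_le_right t T)⟩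

open Classical in
/-- Probability of an event under a pmf on a finite type. -/
noncomputable def pr {α : Type*} [Fintype α] (p : α → ℝ) (E : α → Prop) : ℝ :=
  ∑ a, if E a then p a else 0

/-- Conditional probability P(E | F) = P(E ∧ F) / P(F). -/
noncomputable def cpr {α : Type*} [Fintype α] (p : α → ℝ) (E F : α → Prop) : ℝ :=
  pr p (fun a => E a ∧ F a) / pr p F

variable {U X V W Z Y : Type}
  [Fintype U] [Fintype X] [Fintype V] [Fintype W] [Fintype Z] [Fintype Y]
  [DecidableEq U] [DecidableEq X] [DecidableEq V] [DecidableEq W] [DecidableEq Z] [DecidableEq Y]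
  [Inhabited U] [Inhabited X] [Inhabited V] [Inhabited W] [Inhabited Z] [Inhabited Y]

/-- Joint pmf of the causal model G1:
P = q_1(u_1) ∏_{t=2}^T q_u(u_t|u_{t-1}) ∏_{t=1}^T q_x(x_t|u_t) q_v(v_t|u_t) q_w(w_t|u_t)
  · a_1(z_1|x_1,w_1) b_1(y_1|z_1,x_1,v_1)
  · ∏_{t=2}^T a_t(z_t|x_t,w_t,z_{t-1},y_{t-1}) b_t(y_t|z_t,x_t,v_t,y_{t-1});
the dummy time-0 coordinates are pinned to `default` so that this is a pmf. -/
noncomputable def jointG1 (T : ℕ)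
    (q1 : U → ℝ) (qu : U → U → ℝ) (qx : X → U → ℝ) (qv : V → U → ℝ) (qw : W → U → ℝ)
    (a1 : Z → X → W → ℝ) (b1 : Y → Z → X → V → ℝ)
    (a : ℕ → Z → X → W → Z → Y → ℝ) (b : ℕ → Y → Z → X → V → Y → ℝ)
    (τ : Traj U X V W Z Y T) : ℝ :=
  (if τ.u (idx T 0) = default ∧ τ.x (idx T 0) = default ∧ τ.v (idx T 0) = default ∧
      τ.w (idx T 0) = default ∧ τ.z (idx T 0) = default ∧ τ.y (idx T 0) = default
    then 1 else 0) *
  (q1 (τ.u (idx T 1)) * ∏ j ∈ Finset.Icc 2 T, qu (τ.u (idx T j)) (τ.u (idx T (j - 1)))) *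
  (∏ j ∈ Finset.Icc 1 T,
    (qx (τ.x (idx T j)) (τ.u (idx T j)) * qv (τ.v (idx T j)) (τ.u (idx T j)) *
      qw (τ.w (idx T j)) (τ.u (idx T j)))) *
  (a1 (τ.z (idx T 1)) (τ.x (idx T 1)) (τ.w (idx T 1)) *
    b1 (τ.y (idx T 1)) (τ.z (idx T 1)) (τ.x (idx T 1)) (τ.v (idx T 1)) *
    ∏ j ∈ Finset.Icc 2 T,
      (a j (τ.z (idx T j)) (τ.x (idx T j)) (τ.w (idx T j)) (τ.z (idx T (j - 1)))
          (τ.y (idx T (j - 1))) *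
        b j (τ.y (idx T j)) (τ.z (idx T j)) (τ.x (idx T j)) (τ.v (idx T j))
          (τ.y (idx T (j - 1)))))

/-- Interventional pmf of G1 under do(x_j = xs j) for j ∈ J: the truncated factorization,
with the factors q_x(x_j | u_j), j ∈ J, deleted and x_j fixed to xs j. -/
noncomputable def doxG1 (T : ℕ) (J : Finset ℕ) (xs : ℕ → X)
    (q1 : U → ℝ) (qu : U → U → ℝ) (qx : X → U → ℝ) (qv : V → U → ℝ) (qw : W → U → ℝ)
    (a1 : Z → X → W → ℝ) (b1 : Y → Z → X → V → ℝ)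
    (a : ℕ → Z → X → W → Z → Y → ℝ) (b : ℕ → Y → Z → X → V → Y → ℝ)
    (τ : Traj U X V W Z Y T) : ℝ :=
  (if τ.u (idx T 0) = default ∧ τ.x (idx T 0) = default ∧ τ.v (idx T 0) = default ∧
      τ.w (idx T 0) = default ∧ τ.z (idx T 0) = default ∧ τ.y (idx T 0) = default
    then 1 else 0) *
  (q1 (τ.u (idx T 1)) * ∏ j ∈ Finset.Icc 2 T, qu (τ.u (idx T j)) (τ.u (idx T (j - 1)))) *
  (∏ j ∈ Finset.Icc 1 T,
    ((if j ∈ J then (if τ.x (idx T j) = xs j then 1 else 0)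
      else qx (τ.x (idx T j)) (τ.u (idx T j))) *
      qv (τ.v (idx T j)) (τ.u (idx T j)) * qw (τ.w (idx T j)) (τ.u (idx T j)))) *
  (a1 (τ.z (idx T 1)) (τ.x (idx T 1)) (τ.w (idx T 1)) *
    b1 (τ.y (idx T 1)) (τ.z (idx T 1)) (τ.x (idx T 1)) (τ.v (idx T 1)) *
    ∏ j ∈ Finset.Icc 2 T,
      (a j (τ.z (idx T j)) (τ.x (idx T j)) (τ.w (idx T j)) (τ.z (idx T (j - 1)))
          (τ.y (idx T (j - 1))) *
        b j (τ.y (idx T j)) (τ.z (idx T j)) (τ.x (idx T j)) (τ.v (idx T j))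
          (τ.y (idx T (j - 1)))))

/-- The event that the trajectory agrees with the given past values
S_{t-1} = (y_{1:t-1}, x_{1:t-1}, v_{1:t-1}, w_{1:t-1}); histories are indexed by `Fin t`
with index j standing for time j (index 0 being the pinned dummy time). -/
def histEv (T t : ℕ) (τ : Traj U X V W Z Y T)
    (hy : Fin t → Y) (hx : Fin t → X) (hv : Fin t → V) (hw : Fin t → W) : Prop :=
  (∀ j : Fin t, τ.y (idx T j.val) = hy j) ∧ (∀ j : Fin t, τ.x (idx T j.val) = hx j) ∧
    (∀ j : Fin t, τ.v (idx T j.val) = hv j) ∧ (∀ j : Fin t, τ.w (idx T j.val) = hw j)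

/-!
Read slice by slice, G1 is a Markov chain with state `(u_t, x_t, v_t, w_t, z_t, y_t)`, so the
future of `t` integrates to one. Given the past, the confounder `u_t` reaches `y_t` only through
`x_t`, `v_t` and `w_t`, hence the law of `y_t` given `x_t` and the configuration `c` is
`∑ z, b_t a_t`, whether or not one intervenes. Intervening at `t` replaces `x_t` by `x*` and does
not move the law of `c`, which contains no descendant of `x_t`. Averaging the conditional law over
`c` gives the adjustment formula.
-/

section MarkovChain

variable {S R : Type*} [CommSemiring R]

/-- The extension to all times of a path over the times `0, …, n`, constant from time `n` on. -/
def extendPath {n : ℕ} (σ : Fin (n + 1) → S) (j : ℕ) : S := σ (idx n j)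

/-- The weight of a path up to time `n` under a Markov chain, where `k j s p` is the weight of
moving from `p` at time `j - 1` to `s` at time `j`. Since `0 - 1 = 0` in `ℕ`, the initial factor
reads `k 0 (ω 0) (ω 0)`; an initial distribution is a `k 0` that ignores its last argument. -/
def chainWeight (k : ℕ → S → S → R) (n : ℕ) (ω : ℕ → S) : R :=
  ∏ j ∈ range (n + 1), k j (ω j) (ω (j - 1))

/-- The expectation of `G` under the chain run up to time `n` (unnormalized: the kernels need not be
stochastic). -/
def chainSum [Fintype S] (k : ℕ → S → S → R) (n : ℕ) (G : (ℕ → S) → R) : R :=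
  ∑ σ : Fin (n + 1) → S, chainWeight k n (extendPath σ) * G (extendPath σ)

/-- The expectation of `G` over the state at time `j` only, given the rest of the path. -/
def stepSum [Fintype S] (k : ℕ → S → S → R) (j : ℕ) (G : (ℕ → S) → R) (ω : ℕ → S) : R :=
  ∑ s, k j s (ω (j - 1)) * G (Function.update ω j s)

theorem chainWeight_congr {k k' : ℕ → S → S → R} {n : ℕ} {ω ω' : ℕ → S}
    (hk : ∀ j ≤ n, k j = k' j) (hω : ∀ j ≤ n, ω j = ω' j) :
    chainWeight k n ω = chainWeight k' n ω' := by
  refine prod_congr rfl fun j hj => ?_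
  have hjn : j ≤ n := Nat.lt_succ_iff.mp (mem_range.mp hj)
  rw [hk j hjn, hω j hjn, hω (j - 1) (by omega)]

theorem chainWeight_succ_update (k : ℕ → S → S → R) (n : ℕ) (ω : ℕ → S) (s : S) :
    chainWeight k (n + 1) (Function.update ω (n + 1) s) =
      chainWeight k n ω * k (n + 1) s (ω n) := by
  have past : chainWeight k n (Function.update ω (n + 1) s) = chainWeight k n ω :=
    chainWeight_congr (fun _ _ => rfl) fun j hj => Function.update_of_ne (by omega) _ _
  rw [← past, chainWeight, prod_range_succ, Function.update_self, Nat.add_sub_cancel,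
    Function.update_of_ne (by omega)]
  rfl

theorem extendPath_snoc {n : ℕ} (σ : Fin (n + 1) → S) (s : S) {j : ℕ} (hj : j ≤ n + 1) :
    extendPath (Fin.snoc (α := fun _ => S) σ s) j =
      Function.update (extendPath σ) (n + 1) s j := by
  rcases hj.lt_or_eq with hlt | rfl
  · have hidx : idx (n + 1) j = (idx n j).castSucc := by
      ext; simp only [idx, Fin.val_castSucc]; omega
    rw [extendPath, hidx, Fin.snoc_castSucc, Function.update_of_ne hlt.ne, extendPath]
  · have hidx : idx (n + 1) (n + 1) = Fin.last (n + 1) := by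
      ext; simp [idx]
    rw [extendPath, hidx, Fin.snoc_last, Function.update_self]

variable [Fintype S]

theorem chainSum_succ (k : ℕ → S → S → R) {n : ℕ} {G : (ℕ → S) → R}
    (hG : DependsOn G (Set.Iic (n + 1))) :
    chainSum k (n + 1) G = chainSum k n (stepSum k (n + 1) G) := by
  have split (σ : Fin (n + 1) → S) (s : S) :
      chainWeight k (n + 1) (extendPath (Fin.snoc (α := fun _ => S) σ s)) *
          G (extendPath (Fin.snoc (α := fun _ => S) σ s)) =
        chainWeight k n (extendPath σ) * (k (n + 1) s (extendPath σ n) *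
          G (Function.update (extendPath σ) (n + 1) s)) := by
    rw [chainWeight_congr (fun _ _ => rfl) fun j hj => extendPath_snoc σ s hj,
      hG fun j hj => extendPath_snoc σ s hj, chainWeight_succ_update, mul_assoc]
  rw [chainSum, ← (Fin.snocEquiv fun _ : Fin (n + 1 + 1) => S).sum_comp, Fintype.sum_prod_type,
    sum_comm]
  exact sum_congr rfl fun σ _ => (sum_congr rfl fun s _ => split σ s).trans (mul_sum _ _ _).symm

theorem stepSum_eq_self {k : ℕ → S → S → R} {j : ℕ} (hk : ∀ p, ∑ s, k j s p = 1)
    {G : (ℕ → S) → R} {A : Set ℕ} (hG : DependsOn G A) (hj : j ∉ A) : stepSum k j G = G := by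
  funext ω
  have hupdate (s : S) : G (Function.update ω j s) = G ω :=
    hG fun i hi => Function.update_of_ne (ne_of_mem_of_not_mem hi hj) _ _
  simp only [stepSum, hupdate, ← sum_mul, hk, one_mul]

theorem chainSum_eq_of_le {k : ℕ → S → S → R} {t T : ℕ} (htT : t ≤ T)
    (hk : ∀ j, t < j → j ≤ T → ∀ p, ∑ s, k j s p = 1) {G : (ℕ → S) → R}
    (hG : DependsOn G (Set.Iic t)) : chainSum k T G = chainSum k t G := by
  induction T, htT using Nat.le_induction with
  | base => rfl
  | succ T htT ih =>
    rw [chainSum_succ k (hG.mono (Set.Iic_subset_Iic.mpr (by omega))),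
      stepSum_eq_self (hk (T + 1) (by omega) le_rfl) hG (by simpa using by omega)]
    exact ih fun j hj hjT => hk j hj (by omega)

/-- The future of `t` integrates to one and the past has the same law on both sides, so only the
step at time `t` has to be compared. -/
theorem chainSum_congr_of_stepSum_eq {k k' : ℕ → S → S → R} {t T : ℕ} (ht : 0 < t) (htT : t ≤ T)
    (hpast : ∀ j < t, k j = k' j)
    (hk : ∀ j, t < j → j ≤ T → ∀ p, ∑ s, k j s p = 1)
    (hk' : ∀ j, t < j → j ≤ T → ∀ p, ∑ s, k' j s p = 1)
    {G G' : (ℕ → S) → R} (hG : DependsOn G (Set.Iic t)) (hG' : DependsOn G' (Set.Iic t))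
    (hstep : stepSum k t G = stepSum k' t G') : chainSum k T G = chainSum k' T G' := by
  rw [chainSum_eq_of_le htT hk hG, chainSum_eq_of_le htT hk' hG']
  obtain ⟨n, rfl⟩ := Nat.exists_eq_succ_of_ne_zero ht.ne'
  rw [chainSum_succ k hG, chainSum_succ k' hG', hstep]
  refine sum_congr rfl fun σ _ => ?_
  rw [chainWeight_congr (fun j hj => hpast j (Nat.lt_succ_of_le hj)) fun _ _ => rfl]

end MarkovChain

section Probability

variable {α C : Type*} [Fintype α]

theorem pr_eq_sum_mul_ite (p : α → ℝ) (E : α → Prop) [DecidablePred E] :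
    pr p E = ∑ a, p a * if E a then 1 else 0 := by
  refine sum_congr rfl fun a _ => ?_
  by_cases h : E a <;> simp [h]

theorem pr_nonneg {p : α → ℝ} (hp : ∀ a, 0 ≤ p a) (E : α → Prop) : 0 ≤ pr p E := by
  classical
  exact sum_nonneg fun a _ => ite_nonneg (hp a) le_rfl

theorem sum_mul_comp_eq_sum_mul_pr [Fintype C] (p : α → ℝ) (f : C → ℝ) (g : α → C) :
    ∑ a, p a * f (g a) = ∑ c, f c * pr p fun a => g a = c := by
  classical
  simp only [pr, mul_sum]
  rw [sum_comm]
  simp [mul_comm]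

end Probability

section Slices

variable {U X V W Z Y : Type}

/-- The values of the six processes at a single time. -/
structure Slice (U X V W Z Y : Type) where
  u : U
  x : X
  v : V
  w : W
  z : Z
  y : Y

/-- The identification with a product, through which sums over slices are evaluated. -/
def Slice.equivProd : Slice U X V W Z Y ≃ U × X × V × W × Z × Y where
  toFun s := (s.u, s.x, s.v, s.w, s.z, s.y)
  invFun p := ⟨p.1, p.2.1, p.2.2.1, p.2.2.2.1, p.2.2.2.2.1, p.2.2.2.2.2⟩

/-- A trajectory read as a sequence of slices, the state space of the Markov chain behind G1. -/
def Traj.slicesEquiv {T : ℕ} : Traj U X V W Z Y T ≃ (Fin (T + 1) → Slice U X V W Z Y) where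
  toFun τ j := ⟨τ.u j, τ.x j, τ.v j, τ.w j, τ.z j, τ.y j⟩
  invFun σ := ⟨fun j => (σ j).u, fun j => (σ j).x, fun j => (σ j).v, fun j => (σ j).w,
    fun j => (σ j).z, fun j => (σ j).y⟩

/-- The path of slices of a trajectory, indexed by all natural times. -/
def Traj.path {T : ℕ} (τ : Traj U X V W Z Y T) : ℕ → Slice U X V W Z Y :=
  extendPath (slicesEquiv τ)

/-- The values `c = (v_t, w_t, z_{t-1}, S_{t-1})` adjusted for, with the history `S_{t-1}` in the
order `y, x, v, w`. -/
abbrev Config (X V W Z Y : Type) (t : ℕ) : Type :=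
  V × W × Z × (Fin t → Y) × (Fin t → X) × (Fin t → V) × (Fin t → W)

/-- The configuration at time `t` read off a path. -/
def configAt (t : ℕ) (ω : ℕ → Slice U X V W Z Y) : Config X V W Z Y t :=
  ((ω t).v, (ω t).w, (ω (t - 1)).z, fun j => (ω j).y, fun j => (ω j).x, fun j => (ω j).v,
    fun j => (ω j).w)

theorem dependsOn_configAt (t : ℕ) :
    DependsOn (configAt t : (ℕ → Slice U X V W Z Y) → _) (Set.Iic t) := by
  intro ω ω' h
  have hhist (j : Fin t) : ω j = ω' j := h j j.is_lt.le
  simp only [configAt, h t Set.self_mem_Iic, h (t - 1) (Nat.sub_le t 1), hhist]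

theorem configAt_update {t : ℕ} (ht : 0 < t) (ω : ℕ → Slice U X V W Z Y)
    (s : Slice U X V W Z Y) :
    configAt t (Function.update ω t s) = (s.v, s.w, (configAt t ω).2.2) := by
  have hprev : t - 1 ≠ t := by omega
  have hhist (j : Fin t) : (j : ℕ) ≠ t := j.is_lt.ne
  simp only [configAt, Function.update_self, Function.update_of_ne hprev,
    Function.update_of_ne (hhist _)]

theorem configAt_path_eq_iff {T t : ℕ} (τ : Traj U X V W Z Y T) (v : V) (w : W) (z : Z)
    (hy : Fin t → Y) (hx : Fin t → X) (hv : Fin t → V) (hw : Fin t → W) :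
    configAt t τ.path = (v, w, z, hy, hx, hv, hw) ↔
      τ.v (idx T t) = v ∧ τ.w (idx T t) = w ∧ τ.z (idx T (t - 1)) = z ∧
        histEv T t τ hy hx hv hw := by
  simp only [configAt, Prod.mk.injEq, funext_iff]
  rfl

variable [Fintype U] [Fintype X] [Fintype V] [Fintype W] [Fintype Z] [Fintype Y]

instance : Fintype (Slice U X V W Z Y) := Fintype.ofEquiv _ Slice.equivProd.symm

theorem Slice.sum_eq (f : Slice U X V W Z Y → ℝ) :
    ∑ s, f s = ∑ u, ∑ x, ∑ v, ∑ w, ∑ z, ∑ y, f ⟨u, x, v, w, z, y⟩ := by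
  simp only [← Slice.equivProd.symm.sum_comp, Fintype.sum_prod_type]
  rfl

end Slices

/-- The factors of the causal model G1, in the notation of `jointG1`. -/
structure FactorsG1 (U X V W Z Y : Type) where
  q1 : U → ℝ
  qu : U → U → ℝ
  qx : X → U → ℝ
  qv : V → U → ℝ
  qw : W → U → ℝ
  a1 : Z → X → W → ℝ
  b1 : Y → Z → X → V → ℝ
  a : ℕ → Z → X → W → Z → Y → ℝ
  b : ℕ → Y → Z → X → V → Y → ℝ

namespace FactorsG1

section Definitions

variable {U X V W Z Y : Type}

/-- Every factor used up to the horizon `T` is a conditional probability mass function. -/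
structure IsStochastic [Fintype U] [Fintype X] [Fintype V] [Fintype W] [Fintype Z] [Fintype Y]
    (M : FactorsG1 U X V W Z Y) (T : ℕ) : Prop where
  q1 : M.q1 ∈ stdSimplex ℝ U
  qu : ∀ u₀, (M.qu · u₀) ∈ stdSimplex ℝ U
  qx : ∀ u, (M.qx · u) ∈ stdSimplex ℝ X
  qv : ∀ u, (M.qv · u) ∈ stdSimplex ℝ V
  qw : ∀ u, (M.qw · u) ∈ stdSimplex ℝ W
  a1 : ∀ x w, (M.a1 · x w) ∈ stdSimplex ℝ Z
  b1 : ∀ z x v, (M.b1 · z x v) ∈ stdSimplex ℝ Y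
  a : ∀ j, 2 ≤ j → j ≤ T → ∀ x w z₀ y₀, (M.a j · x w z₀ y₀) ∈ stdSimplex ℝ Z
  b : ∀ j, 2 ≤ j → j ≤ T → ∀ z x v y₀, (M.b j · z x v y₀) ∈ stdSimplex ℝ Y

/-- The mechanism producing `x_j` under `do(x_J = xs)`: a point mass at `xs j` for `j ∈ J`, and
`q_x` otherwise. -/
def xFactor [DecidableEq X] (M : FactorsG1 U X V W Z Y) (J : Finset ℕ) (xs : ℕ → X) (j : ℕ)
    (x : X) (u : U) : ℝ :=
  if j ∈ J then (if x = xs j then 1 else 0) else M.qx x u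

/-- The conditional expectation of `ψ(y_t)` given `x_t = x`, `v_t = v`, `w_t = w`, `z_{t-1} = z₀`
and `y_{t-1} = y₀`. -/
def responseMean [Fintype Z] [Fintype Y] (M : FactorsG1 U X V W Z Y) (t : ℕ) (ψ : Y → ℝ)
    (x : X) (v : V) (w : W) (z₀ : Z) (y₀ : Y) : ℝ :=
  ∑ z, M.a t z x w z₀ y₀ * ∑ y, M.b t y z x v y₀ * ψ y

/-- The conditional probability of `y_t = y` given `x_t = x` and the configuration `c`, obtained by
summing out `z_t`. -/
def responseProb [Fintype Z] (M : FactorsG1 U X V W Z Y) {t : ℕ} (ht : 2 ≤ t) (y : Y) (x : X)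
    (c : Config X V W Z Y t) : ℝ :=
  ∑ z, M.b t y z x c.1 (c.2.2.2.1 ⟨t - 1, by omega⟩) *
    M.a t z x c.2.1 c.2.2.1 (c.2.2.2.1 ⟨t - 1, by omega⟩)

theorem responseMean_indicator [Fintype Z] [Fintype Y] [DecidableEq Y]
    (M : FactorsG1 U X V W Z Y) {t : ℕ} (ht : 2 ≤ t) (y : Y) (x : X)
    (ω : ℕ → Slice U X V W Z Y) :
    M.responseMean t (fun y' => if y' = y then 1 else 0) x (ω t).v (ω t).w (ω (t - 1)).z
        (ω (t - 1)).y = M.responseProb ht y x (configAt t ω) := by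
  simp [responseMean, responseProb, configAt, mul_comm]

variable [Fintype U] [Fintype X] [Fintype V] [Fintype W] [Fintype Z] [Fintype Y]
  {M : FactorsG1 U X V W Z Y} {T : ℕ}

theorem IsStochastic.sum_xFactor [DecidableEq X] (hM : M.IsStochastic T) (J : Finset ℕ)
    (xs : ℕ → X) (j : ℕ) (u : U) : ∑ x, M.xFactor J xs j x u = 1 := by
  unfold xFactor
  split_ifs
  · simp
  · exact (hM.qx u).2

theorem IsStochastic.responseMean_one (hM : M.IsStochastic T) {t : ℕ} (ht : 2 ≤ t)
    (htT : t ≤ T) (x : X) (v : V) (w : W) (z₀ : Z) (y₀ : Y) :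
    M.responseMean t (fun _ => 1) x v w z₀ y₀ = 1 := by
  simp only [responseMean, mul_one, (hM.b t ht htT _ _ _ _).2, (hM.a t ht htT _ _ _ _).2]

end Definitions

variable {U X V W Z Y : Type}
  [DecidableEq U] [DecidableEq X] [DecidableEq V] [DecidableEq W] [DecidableEq Z] [DecidableEq Y]
  [Inhabited U] [Inhabited X] [Inhabited V] [Inhabited W] [Inhabited Z] [Inhabited Y]
  (M : FactorsG1 U X V W Z Y)

/-- The observational pmf `jointG1` of the bundled factors. -/
noncomputable def pmf (T : ℕ) : Traj U X V W Z Y T → ℝ :=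
  jointG1 T M.q1 M.qu M.qx M.qv M.qw M.a1 M.b1 M.a M.b

/-- The interventional pmf `doxG1` of the bundled factors. -/
noncomputable def doPmf (T : ℕ) (J : Finset ℕ) (xs : ℕ → X) : Traj U X V W Z Y T → ℝ :=
  doxG1 T J xs M.q1 M.qu M.qx M.qv M.qw M.a1 M.b1 M.a M.b

/-- The transition kernel of the Markov chain of slices under `do(x_J = xs)`; time `0` pins the
dummy slice. -/
def kernel (J : Finset ℕ) (xs : ℕ → X) : ℕ → Slice U X V W Z Y → Slice U X V W Z Y → ℝ
  | 0, s, _ => if s.u = default ∧ s.x = default ∧ s.v = default ∧ s.w = default ∧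
      s.z = default ∧ s.y = default then 1 else 0
  | 1, s, _ => M.q1 s.u * (M.xFactor J xs 1 s.x s.u * M.qv s.v s.u * M.qw s.w s.u) *
      (M.a1 s.z s.x s.w * M.b1 s.y s.z s.x s.v)
  | j + 2, s, p => M.qu s.u p.u * (M.xFactor J xs (j + 2) s.x s.u * M.qv s.v s.u * M.qw s.w s.u) *
      (M.a (j + 2) s.z s.x s.w p.z p.y * M.b (j + 2) s.y s.z s.x s.v p.y)

theorem doPmf_empty (T : ℕ) (xs : ℕ → X) : M.doPmf T ∅ xs = M.pmf T := by
  funext τ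
  simp only [doPmf, pmf, doxG1, jointG1, notMem_empty, if_false]

theorem doPmf_eq_chainWeight {T : ℕ} (hT : 1 ≤ T) (J : Finset ℕ) (xs : ℕ → X)
    (τ : Traj U X V W Z Y T) : M.doPmf T J xs τ = chainWeight (M.kernel J xs) T τ.path := by
  have regroup (d q Q e E r R : ℝ) :
      d * (q * Q) * (e * E) * (r * R) = d * (q * e * r * (Q * E * R)) := by ring
  have split_one (f : ℕ → ℝ) : ∏ j ∈ Icc 1 T, f j = f 1 * ∏ j ∈ Icc 2 T, f j :=
    (mul_prod_Ioc_eq_prod_Icc hT).symm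
  have split_zero (f : ℕ → ℝ) : ∏ j ∈ range (T + 1), f j = f 0 * ∏ j ∈ Icc 1 T, f j := by
    rw [range_eq_Ico]; exact prod_eq_prod_Ico_succ_bot (Nat.succ_pos T) f
  have transitions : ∏ j ∈ Icc 2 T, M.kernel J xs j (τ.path j) (τ.path (j - 1)) =
      ∏ j ∈ Icc 2 T,
        M.qu (τ.path j).u (τ.path (j - 1)).u *
          (M.xFactor J xs j (τ.path j).x (τ.path j).u * M.qv (τ.path j).v (τ.path j).u *
            M.qw (τ.path j).w (τ.path j).u) *
          (M.a j (τ.path j).z (τ.path j).x (τ.path j).w (τ.path (j - 1)).z (τ.path (j - 1)).y *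
            M.b j (τ.path j).y (τ.path j).z (τ.path j).x (τ.path j).v (τ.path (j - 1)).y) := by
    refine prod_congr rfl fun j hj => ?_
    obtain ⟨i, rfl⟩ := Nat.exists_eq_add_of_le' (mem_Icc.mp hj).1
    rfl
  rw [chainWeight, split_zero, split_one, transitions, prod_mul_distrib, prod_mul_distrib, doPmf,
    doxG1, split_one]
  exact regroup _ _ _ _ _ _ _

variable [Fintype U] [Fintype X] [Fintype V] [Fintype W] [Fintype Z] [Fintype Y]

theorem sum_doPmf_mul_path {T : ℕ} (hT : 1 ≤ T) (J : Finset ℕ) (xs : ℕ → X)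
    (G : (ℕ → Slice U X V W Z Y) → ℝ) :
    ∑ τ : Traj U X V W Z Y T, M.doPmf T J xs τ * G τ.path = chainSum (M.kernel J xs) T G := by
  rw [chainSum, ← Traj.slicesEquiv.sum_comp]
  simp only [M.doPmf_eq_chainWeight hT, Traj.path]

theorem sum_kernel_mul (J : Finset ℕ) (xs : ℕ → X) {j : ℕ} (hj : 2 ≤ j)
    (p : Slice U X V W Z Y) (φ : X → V → W → ℝ) (ψ : Y → ℝ) :
    ∑ s, M.kernel J xs j s p * (φ s.x s.v s.w * ψ s.y) =
      ∑ u, ∑ v, ∑ w, M.qu u p.u * M.qv v u * M.qw w u *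
        ∑ x, M.xFactor J xs j x u * (φ x v w * M.responseMean j ψ x v w p.z p.y) := by
  obtain ⟨i, rfl⟩ := Nat.exists_eq_add_of_le' hj
  rw [Slice.sum_eq]
  refine sum_congr rfl fun u _ => ?_
  rw [sum_comm]
  refine sum_congr rfl fun v _ => ?_
  rw [sum_comm]
  refine sum_congr rfl fun w _ => ?_
  simp only [responseMean, kernel, mul_sum]
  refine sum_congr rfl fun x _ => sum_congr rfl fun z _ => sum_congr rfl fun y _ => ?_
  ring

namespace IsStochastic

variable {M} {T : ℕ} (hM : M.IsStochastic T)
include hM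

theorem sum_kernel (J : Finset ℕ) (xs : ℕ → X) {j : ℕ} (hj : 2 ≤ j) (hjT : j ≤ T)
    (p : Slice U X V W Z Y) : ∑ s, M.kernel J xs j s p = 1 := by
  have h := M.sum_kernel_mul J xs hj p (fun _ _ _ => 1) fun _ => 1
  simp only [mul_one, hM.responseMean_one hj hjT, hM.sum_xFactor, ← mul_sum, (hM.qw _).2,
    (hM.qv _).2, (hM.qu _).2] at h
  exact h

theorem kernel_nonneg (J : Finset ℕ) (xs : ℕ → X) {j : ℕ} (hjT : j ≤ T)
    (s p : Slice U X V W Z Y) : 0 ≤ M.kernel J xs j s p := by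
  have hx (u : U) : 0 ≤ M.xFactor J xs j s.x u := by
    unfold xFactor
    split_ifs
    exacts [zero_le_one, le_rfl, (hM.qx u).1 _]
  have hxvw : 0 ≤ M.xFactor J xs j s.x s.u * M.qv s.v s.u * M.qw s.w s.u :=
    mul_nonneg (mul_nonneg (hx _) ((hM.qv _).1 _)) ((hM.qw _).1 _)
  match j with
  | 0 =>
    exact ite_nonneg zero_le_one le_rfl
  | 1 =>
    exact mul_nonneg (mul_nonneg (hM.q1.1 _) hxvw)
      (mul_nonneg ((hM.a1 _ _).1 _) ((hM.b1 _ _ _).1 _))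
  | i + 2 =>
    exact mul_nonneg (mul_nonneg ((hM.qu _).1 _) hxvw)
      (mul_nonneg ((hM.a _ (by omega) hjT _ _ _ _).1 _) ((hM.b _ (by omega) hjT _ _ _ _).1 _))

theorem doPmf_nonneg (hT : 1 ≤ T) (J : Finset ℕ) (xs : ℕ → X) (τ : Traj U X V W Z Y T) :
    0 ≤ M.doPmf T J xs τ := by
  rw [M.doPmf_eq_chainWeight hT]
  exact prod_nonneg fun j hj =>
    hM.kernel_nonneg J xs (Nat.lt_succ_iff.mp (mem_range.mp hj)) _ _

variable {t : ℕ} (ht : 2 ≤ t) (htT : t ≤ T) (J : Finset ℕ) (xs : ℕ → X)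
include ht htT

theorem sum_doPmf_mul_outcome (F : X → Config X V W Z Y t → ℝ) (ψ : Y → ℝ) :
    ∑ τ : Traj U X V W Z Y T,
        M.doPmf T J xs τ * (F (τ.path t).x (configAt t τ.path) * ψ (τ.path t).y) =
      ∑ τ : Traj U X V W Z Y T,
        M.doPmf T J xs τ * (F (τ.path t).x (configAt t τ.path) *
          M.responseMean t ψ (τ.path t).x (τ.path t).v (τ.path t).w
            (τ.path (t - 1)).z (τ.path (t - 1)).y) := by
  rw [M.sum_doPmf_mul_path (by omega) J xs fun ω => F (ω t).x (configAt t ω) * ψ (ω t).y,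
    M.sum_doPmf_mul_path (by omega) J xs fun ω => F (ω t).x (configAt t ω) *
      M.responseMean t ψ (ω t).x (ω t).v (ω t).w (ω (t - 1)).z (ω (t - 1)).y]
  have hsum (j : ℕ) (hj : t < j) (hjT : j ≤ T) := hM.sum_kernel J xs (by omega : 2 ≤ j) hjT
  refine chainSum_congr_of_stepSum_eq (by omega) htT (fun _ _ => rfl) hsum hsum
    (fun ω ω' h => ?_) (fun ω ω' h => ?_) ?_
  · simp only [dependsOn_configAt t h, h t Set.self_mem_Iic]
  · simp only [dependsOn_configAt t h, h t Set.self_mem_Iic, h (t - 1) (Nat.sub_le t 1)]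
  funext ω
  have hprev : t - 1 ≠ t := by omega
  simp only [stepSum, configAt_update (by omega : 0 < t), Function.update_self,
    Function.update_of_ne hprev]
  have hl := M.sum_kernel_mul J xs ht (ω (t - 1))
    (fun x v w => F x (v, w, (configAt t ω).2.2)) ψ
  have hr := M.sum_kernel_mul J xs ht (ω (t - 1))
    (fun x v w => F x (v, w, (configAt t ω).2.2) *
      M.responseMean t ψ x v w (ω (t - 1)).z (ω (t - 1)).y) fun _ => 1
  simp only [hM.responseMean_one ht htT, mul_one] at hr
  rw [hl, hr]

theorem sum_doPmf_insert (F : X → Config X V W Z Y t → ℝ) :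
    ∑ τ : Traj U X V W Z Y T,
        M.doPmf T (insert t J) xs τ * F (τ.path t).x (configAt t τ.path) =
      ∑ τ : Traj U X V W Z Y T, M.doPmf T J xs τ * F (xs t) (configAt t τ.path) := by
  rw [M.sum_doPmf_mul_path (by omega) (insert t J) xs fun ω => F (ω t).x (configAt t ω),
    M.sum_doPmf_mul_path (by omega) J xs fun ω => F (xs t) (configAt t ω)]
  have hsum (I : Finset ℕ) (j : ℕ) (hj : t < j) (hjT : j ≤ T) :=
    hM.sum_kernel I xs (by omega : 2 ≤ j) hjT
  refine chainSum_congr_of_stepSum_eq (by omega) htT (fun j hj => ?_) (hsum _) (hsum _)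
    (fun ω ω' h => ?_) (fun ω ω' h => ?_) ?_
  · have hmem : j ∈ insert t J ↔ j ∈ J := by simp [hj.ne]
    funext s p
    match j with
    | 0 => rfl
    | 1 | i + 2 => simp only [kernel, xFactor, hmem]
  · simp only [dependsOn_configAt t h, h t Set.self_mem_Iic]
  · simp only [dependsOn_configAt t h]
  funext ω
  simp only [stepSum, configAt_update (by omega : 0 < t), Function.update_self]
  have hdo := M.sum_kernel_mul (insert t J) xs ht (ω (t - 1))
    (fun x v w => F x (v, w, (configAt t ω).2.2)) fun _ => 1
  have hobs := M.sum_kernel_mul J xs ht (ω (t - 1))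
    (fun _ v w => F (xs t) (v, w, (configAt t ω).2.2)) fun _ => 1
  simp only [hM.responseMean_one ht htT, mul_one] at hdo hobs
  rw [hdo, hobs]
  simp only [← sum_mul, hM.sum_xFactor, one_mul]
  simp [xFactor]

theorem pr_doPmf_outcome_and (y : Y) (x : X) (c : Config X V W Z Y t) :
    pr (M.doPmf T J xs)
        (fun τ => (τ.path t).y = y ∧ (τ.path t).x = x ∧ configAt t τ.path = c) =
      M.responseProb ht y x c * pr (M.doPmf T J xs)
        (fun τ => (τ.path t).x = x ∧ configAt t τ.path = c) := by
  classical
  have h := hM.sum_doPmf_mul_outcome ht htT J xs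
    (fun x' c' => if x' = x ∧ c' = c then 1 else 0) fun y' => if y' = y then 1 else 0
  simp only [M.responseMean_indicator ht] at h
  rw [pr_eq_sum_mul_ite, pr_eq_sum_mul_ite, mul_sum]
  refine Eq.trans (sum_congr rfl fun τ _ => ?_) (h.trans (sum_congr rfl fun τ _ => ?_))
  · by_cases hτ : (τ.path t).y = y <;> simp [hτ]
  · split_ifs with hτ
    · rw [hτ.1, hτ.2]; ring
    · ring

theorem cpr_doPmf_outcome (y : Y) {x : X} {c : Config X V W Z Y t}
    (hc : pr (M.doPmf T J xs) (fun τ => (τ.path t).x = x ∧ configAt t τ.path = c) ≠ 0) :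
    cpr (M.doPmf T J xs) (fun τ => (τ.path t).y = y)
        (fun τ => (τ.path t).x = x ∧ configAt t τ.path = c) = M.responseProb ht y x c := by
  rw [cpr, hM.pr_doPmf_outcome_and ht htT, mul_div_cancel_right₀ _ hc]

theorem pr_doPmf_insert_outcome (y : Y) :
    pr (M.doPmf T (insert t J) xs) (fun τ => (τ.path t).y = y) =
      ∑ c, M.responseProb ht y (xs t) c *
        pr (M.doPmf T J xs) (fun τ => configAt t τ.path = c) := by
  have h := hM.sum_doPmf_mul_outcome ht htT (insert t J) xs (fun _ _ => 1)
    fun y' => if y' = y then 1 else 0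
  simp only [one_mul, M.responseMean_indicator ht] at h
  rw [pr_eq_sum_mul_ite, h, hM.sum_doPmf_insert ht htT J xs (M.responseProb ht y)]
  exact sum_mul_comp_eq_sum_mul_pr (M.doPmf T J xs) (M.responseProb ht y (xs t))
    fun τ : Traj U X V W Z Y T => configAt t τ.path

theorem pr_doPmf_insert_outcome_eq_sum_cpr (y : Y)
    (hpos : ∀ c, 0 < pr (M.doPmf T J xs) (fun τ => configAt t τ.path = c) →
      0 < pr (M.doPmf T J xs) (fun τ => (τ.path t).x = xs t ∧ configAt t τ.path = c)) :
    pr (M.doPmf T (insert t J) xs) (fun τ => (τ.path t).y = y) =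
      ∑ c, cpr (M.doPmf T J xs) (fun τ => (τ.path t).y = y)
          (fun τ => (τ.path t).x = xs t ∧ configAt t τ.path = c) *
        pr (M.doPmf T J xs) (fun τ => configAt t τ.path = c) := by
  rw [hM.pr_doPmf_insert_outcome ht htT]
  refine sum_congr rfl fun c _ => ?_
  have hc := pr_nonneg (hM.doPmf_nonneg (by omega) J xs) fun τ => configAt t τ.path = c
  rcases hc.eq_or_lt with hzero | hlt
  · rw [← hzero, mul_zero, mul_zero]
  · rw [hM.cpr_doPmf_outcome ht htT J xs y (hpos c hlt).ne']

end IsStochastic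

end FactorsG1

/-- Immediate causal effect of x_t, graph G1: with
C = (v_t, w_t, z_{t-1}, S_{t-1}) and assuming P(x_t = x*, c) > 0 whenever P(c) > 0,
P(y_t = y | do(x_t = x*)) = Σ_c P(y_t = y | x_t = x*, c) P(c)
  = Σ_c Σ_{z_t} b_t(y | z_t, x*, v_t, y_{t-1}) a_t(z_t | x*, w_t, z_{t-1}, y_{t-1}) P(c). -/
theorem statement_0 {U X V W Z Y : Type}
    [Fintype U] [Fintype X] [Fintype V] [Fintype W] [Fintype Z] [Fintype Y]
    [DecidableEq U] [DecidableEq X] [DecidableEq V] [DecidableEq W] [DecidableEq Z]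
    [DecidableEq Y]
    [Inhabited U] [Inhabited X] [Inhabited V] [Inhabited W] [Inhabited Z] [Inhabited Y]
    (T t : ℕ) (ht2 : 2 ≤ t) (htT : t ≤ T) (xstar : X)
    (q1 : U → ℝ) (qu : U → U → ℝ) (qx : X → U → ℝ) (qv : V → U → ℝ) (qw : W → U → ℝ)
    (a1 : Z → X → W → ℝ) (b1 : Y → Z → X → V → ℝ)
    (a : ℕ → Z → X → W → Z → Y → ℝ) (b : ℕ → Y → Z → X → V → Y → ℝ)
    (hq1 : (∀ u', 0 ≤ q1 u') ∧ (∑ u', q1 u') = 1)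
    (hqu : ∀ u0, (∀ u', 0 ≤ qu u' u0) ∧ (∑ u', qu u' u0) = 1)
    (hqx : ∀ u0, (∀ x', 0 ≤ qx x' u0) ∧ (∑ x', qx x' u0) = 1)
    (hqv : ∀ u0, (∀ v', 0 ≤ qv v' u0) ∧ (∑ v', qv v' u0) = 1)
    (hqw : ∀ u0, (∀ w', 0 ≤ qw w' u0) ∧ (∑ w', qw w' u0) = 1)
    (ha1 : ∀ x0 w0, (∀ z', 0 ≤ a1 z' x0 w0) ∧ (∑ z', a1 z' x0 w0) = 1)
    (hb1 : ∀ z0 x0 v0, (∀ y', 0 ≤ b1 y' z0 x0 v0) ∧ (∑ y', b1 y' z0 x0 v0) = 1)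
    (ha : ∀ j, 2 ≤ j → j ≤ T → ∀ x0 w0 z0 y0,
      (∀ z', 0 ≤ a j z' x0 w0 z0 y0) ∧ (∑ z', a j z' x0 w0 z0 y0) = 1)
    (hb : ∀ j, 2 ≤ j → j ≤ T → ∀ z0 x0 v0 y0,
      (∀ y', 0 ≤ b j y' z0 x0 v0 y0) ∧ (∑ y', b j y' z0 x0 v0 y0) = 1)
    (hpos : ∀ (vt : V) (wt : W) (zt1 : Z) (hy : Fin t → Y) (hx : Fin t → X)
        (hv : Fin t → V) (hw : Fin t → W),
      0 < pr (jointG1 T q1 qu qx qv qw a1 b1 a b)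
          (fun τ => τ.v (idx T t) = vt ∧ τ.w (idx T t) = wt ∧
            τ.z (idx T (t - 1)) = zt1 ∧ histEv T t τ hy hx hv hw) →
      0 < pr (jointG1 T q1 qu qx qv qw a1 b1 a b)
          (fun τ => τ.x (idx T t) = xstar ∧ τ.v (idx T t) = vt ∧ τ.w (idx T t) = wt ∧
            τ.z (idx T (t - 1)) = zt1 ∧ histEv T t τ hy hx hv hw)) :
    ∀ yv : Y,
      (pr (doxG1 T {t} (fun _ => xstar) q1 qu qx qv qw a1 b1 a b)
          (fun τ => τ.y (idx T t) = yv) =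
        ∑ vt : V, ∑ wt : W, ∑ zt1 : Z, ∑ hy : Fin t → Y, ∑ hx : Fin t → X,
          ∑ hv : Fin t → V, ∑ hw : Fin t → W,
          cpr (jointG1 T q1 qu qx qv qw a1 b1 a b) (fun τ => τ.y (idx T t) = yv)
            (fun τ => τ.x (idx T t) = xstar ∧ τ.v (idx T t) = vt ∧ τ.w (idx T t) = wt ∧
              τ.z (idx T (t - 1)) = zt1 ∧ histEv T t τ hy hx hv hw) *
          pr (jointG1 T q1 qu qx qv qw a1 b1 a b)
            (fun τ => τ.v (idx T t) = vt ∧ τ.w (idx T t) = wt ∧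
              τ.z (idx T (t - 1)) = zt1 ∧ histEv T t τ hy hx hv hw)) ∧
      (pr (doxG1 T {t} (fun _ => xstar) q1 qu qx qv qw a1 b1 a b)
          (fun τ => τ.y (idx T t) = yv) =
        ∑ vt : V, ∑ wt : W, ∑ zt1 : Z, ∑ hy : Fin t → Y, ∑ hx : Fin t → X,
          ∑ hv : Fin t → V, ∑ hw : Fin t → W,
          (∑ zt : Z, b t yv zt xstar vt (hy ⟨t - 1, by omega⟩) *
              a t zt xstar wt zt1 (hy ⟨t - 1, by omega⟩)) *
          pr (jointG1 T q1 qu qx qv qw a1 b1 a b)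
            (fun τ => τ.v (idx T t) = vt ∧ τ.w (idx T t) = wt ∧
              τ.z (idx T (t - 1)) = zt1 ∧ histEv T t τ hy hx hv hw)) := by
  intro yv
  let M : FactorsG1 U X V W Z Y := ⟨q1, qu, qx, qv, qw, a1, b1, a, b⟩
  have hM : M.IsStochastic T := ⟨hq1, hqu, hqx, hqv, hqw, ha1, hb1, ha, hb⟩
  have adjusted_cpr := hM.pr_doPmf_insert_outcome_eq_sum_cpr ht2 htT ∅ (fun _ => xstar) yv
    fun ⟨vt, wt, zt1, hy, hx, hv, hw⟩ => by
      simp only [M.doPmf_empty, configAt_path_eq_iff]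
      exact hpos vt wt zt1 hy hx hv hw
  have adjusted_factors := hM.pr_doPmf_insert_outcome ht2 htT ∅ (fun _ => xstar) yv
  simp only [insert_empty_eq, M.doPmf_empty, Fintype.sum_prod_type, configAt_path_eq_iff]
    at adjusted_cpr adjusted_factors
  exact ⟨adjusted_cpr, adjusted_factors⟩
end

section
/- For a FAN-HMM, fix t with 2 ≤ t ≤ T and k ≥ 1 with t + k ≤ T, suppose P(y_{1:t−1}) > 0, and condition only on the responses y_{1:t−1} (treating y_{t:t+k−1} as unobserved). Define E_j(s, m) = P(z_j = s, y_j = m | y_{1:t−1}) for t ≤ j ≤ t+k. Then E_t(s, m) = ( Σ_{r=1}^S ᾱ_{t−1}(r) A_t(r, s; y_{t−1}) ) B_t(s, m; y_{t−1}) with ᾱ_{t−1}(r) = P(z_{t−1} = r | y_{1:t−1}), and for t < j ≤ t+k the recursion E_j(s, m) = Σ_{r=1}^S Σ_{m'=1}^M E_{j−1}(r, m') A_j(r, s; m') B_j(s, m; m') holds; in particular the joint conditional distribution P(z_{t+k} = s, y_{t+k} = m | y_{1:t−1}) is computed by this recursion without enumerating the intermediate response and state trajectories. -/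
open Finset

/-- View a tuple indexed by `Fin T` (index i is time i+1) as a sequence on times 1..T. -/
def fext {β : Type*} [Inhabited β] (T : ℕ) (g : Fin T → β) (j : ℕ) : β :=
  if h : 1 ≤ j ∧ j ≤ T then g ⟨j - 1, by omega⟩ else default

/-- Joint pmf of a FAN-HMM over pairs (z_{1:T}, y_{1:T}):
π(z_1) B_1(z_1, y_1) ∏_{t=2}^T A_t(z_{t-1}, z_t; y_{t-1}) B_t(z_t, y_t; y_{t-1}),
where `A j r s m = P(z_j = s | z_{j-1} = r, y_{j-1} = m)` and
`B j s m m' = P(y_j = m | z_j = s, y_{j-1} = m')`. -/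
noncomputable def fanJoint {S M : ℕ} [NeZero S] [NeZero M] (pi0 : Fin S → ℝ)
    (A : ℕ → Fin S → Fin S → Fin M → ℝ) (B1 : Fin S → Fin M → ℝ)
    (B : ℕ → Fin S → Fin M → Fin M → ℝ) (T : ℕ)
    (p : (Fin T → Fin S) × (Fin T → Fin M)) : ℝ :=
  pi0 (fext T p.1 1) * B1 (fext T p.1 1) (fext T p.2 1) *
    ∏ j ∈ Finset.Icc 2 T,
      (A j (fext T p.1 (j - 1)) (fext T p.1 j) (fext T p.2 (j - 1)) *
        B j (fext T p.1 j) (fext T p.2 j) (fext T p.2 (j - 1)))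

/-!
The pairs `(z_j, y_j)` form an inhomogeneous Markov chain with the transition matrices
`A_j(r, s; m') * B_j(s, m; m')`. For an event `H` about the first `n` times, summing out the times
after `n + 1` and then splitting on the value at time `n` gives
`P(x_{n+1} = b, H) = ∑ a, P(x_n = a, H) * K_{n+1}(a, b)`, and dividing by `P(H)` yields the
recursion. At `n = t - 1` the event `H` pins down `y_{t-1}`, so the sum over `m'` reduces to one
term.
-/

section Probability

variable {α β : Type*} [Fintype α]

theorem cpr_and_eq_ite [DecidableEq β] (p : α → ℝ) {E F : α → Prop} {f : α → β} {b : β}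
    (h : ∀ a, F a → f a = b) (b' : β) :
    cpr p (fun a => E a ∧ f a = b') F = if b = b' then cpr p E F else 0 := by
  have hEF : (fun a => (E a ∧ f a = b') ∧ F a) = fun a => b = b' ∧ E a ∧ F a := by
    funext a
    refine propext ⟨?_, ?_⟩
    · rintro ⟨⟨hE, rfl⟩, hF⟩
      exact ⟨(h a hF).symm, hE, hF⟩
    · rintro ⟨rfl, hE, hF⟩
      exact ⟨⟨hE, h a hF⟩, hF⟩
  rw [cpr, hEF]
  by_cases hb : b = b'
  · simp only [hb, true_and, if_true, cpr]
  · simp [pr, hb]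

open Classical in
theorem sum_pr_fiber_mul [Fintype β] (p : α → ℝ) (f : α → β) (H : α → Prop) (g : β → ℝ) :
    ∑ b, pr p (fun a => f a = b ∧ H a) * g b = ∑ a, if H a then p a * g (f a) else 0 := by
  simp only [pr, Finset.sum_mul]
  rw [Finset.sum_comm]
  refine Finset.sum_congr rfl fun a _ => ?_
  by_cases hH : H a <;> simp [hH]

end Probability

theorem update_eq_of_dependsOn_Icc {β γ : Type*} {n : ℕ} {F : (ℕ → β) → γ}
    (hF : DependsOn F (Set.Icc 1 n)) (x : ℕ → β) (b : β) :
    F (Function.update x (n + 1) b) = F x :=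
  hF fun _ hi => Function.update_of_ne (Nat.lt_succ_of_le hi.2).ne _ _

theorem dependsOn_forall_comp_eq {β γ : Type*} (n : ℕ) (f : β → γ) (y : ℕ → γ) :
    DependsOn (fun x : ℕ → β => ∀ j, 1 ≤ j → j ≤ n → f (x j) = y j) (Set.Icc 1 n) :=
  fun _ _ h => forall_congr fun j => forall_congr fun hj => forall_congr fun hjn => by
    rw [h j ⟨hj, hjn⟩]

theorem fext_snoc {β : Type*} [Inhabited β] (n : ℕ) (g : Fin n → β) (b : β) :
    fext (n + 1) (Fin.snoc (α := fun _ => β) g b) = Function.update (fext n g) (n + 1) b := by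
  funext j
  rcases eq_or_ne j (n + 1) with rfl | hj
  · simp [fext, Fin.snoc]
  · rw [Function.update_of_ne hj]
    by_cases h : 1 ≤ j ∧ j ≤ n
    · have hj_lt : j - 1 < n := by omega
      simp [fext, h, h.2.trans n.le_succ, Fin.snoc, hj_lt]
    · have h_succ : ¬(1 ≤ j ∧ j ≤ n + 1) := by omega
      simp only [fext, dif_neg h, dif_neg h_succ]

theorem sum_eq_sum_sum_snoc {β R : Type*} [Fintype β] [AddCommMonoid R] (n : ℕ)
    (f : (Fin (n + 1) → β) → R) :
    ∑ g, f g = ∑ g : Fin n → β, ∑ b, f (Fin.snoc (α := fun _ => β) g b) := by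
  rw [← Equiv.sum_comp (Fin.snocEquiv fun _ : Fin (n + 1) => β), Fintype.sum_prod_type_right]
  rfl

section MarkovChain

variable {X : Type*} [Inhabited X]

/-- Joint weight of a path `x_{1:T}` of an inhomogeneous Markov chain with initial weights `ν` and
transition matrices `K j`, where `K j a b` is the weight of `x_j = b` given `x_{j-1} = a`.
As in `fanJoint`, times are `1, …, T` and paths are read through `fext`. -/
noncomputable def chainJoint (ν : X → ℝ) (K : ℕ → X → X → ℝ) (T : ℕ) (x : Fin T → X) : ℝ :=
  ν (fext T x 1) * ∏ j ∈ Finset.Icc 2 T, K j (fext T x (j - 1)) (fext T x j)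

variable (ν : X → ℝ) (K : ℕ → X → X → ℝ)

theorem chainJoint_snoc {n : ℕ} (hn : 1 ≤ n) (x : Fin n → X) (b : X) :
    chainJoint ν K (n + 1) (Fin.snoc (α := fun _ => X) x b) =
      chainJoint ν K n x * K (n + 1) (fext n x n) b := by
  have hpast : ∀ j ≤ n, Function.update (fext n x) (n + 1) b j = fext n x j :=
    fun j hj => Function.update_of_ne (Nat.lt_succ_of_le hj).ne _ _
  have hprod : ∏ j ∈ Finset.Icc 2 n, K j (Function.update (fext n x) (n + 1) b (j - 1))
        (Function.update (fext n x) (n + 1) b j) =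
      ∏ j ∈ Finset.Icc 2 n, K j (fext n x (j - 1)) (fext n x j) := by
    refine Finset.prod_congr rfl fun j hj => ?_
    have hjn := (Finset.mem_Icc.mp hj).2
    rw [hpast j hjn, hpast (j - 1) ((Nat.sub_le j 1).trans hjn)]
  rw [chainJoint, chainJoint, fext_snoc, Finset.prod_Icc_succ_top (by omega), hprod, hpast 1 hn,
    Nat.add_sub_cancel, hpast n le_rfl, Function.update_self, mul_assoc]

variable [Fintype X]

open Classical in
theorem pr_chainJoint_succ {n : ℕ} (hn : 1 ≤ n) (E : (ℕ → X) → Prop) :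
    pr (chainJoint ν K (n + 1)) (fun x => E (fext (n + 1) x)) =
      ∑ x, chainJoint ν K n x *
        ∑ b, if E (Function.update (fext n x) (n + 1) b) then K (n + 1) (fext n x n) b else 0 := by
  simp only [pr, sum_eq_sum_sum_snoc n, fext_snoc, chainJoint_snoc ν K hn, Finset.mul_sum,
    mul_ite, mul_zero]

variable {K}

theorem pr_chainJoint_eq_of_dependsOn {n T : ℕ} (hn : 1 ≤ n) (hnT : n ≤ T)
    (hK : ∀ j, n < j → j ≤ T → ∀ a, ∑ b, K j a b = 1) {E : (ℕ → X) → Prop}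
    (hE : DependsOn E (Set.Icc 1 n)) :
    pr (chainJoint ν K T) (fun x => E (fext T x)) =
      pr (chainJoint ν K n) (fun x => E (fext n x)) := by
  classical
  induction T, hnT using Nat.le_induction with
  | base => rfl
  | succ T hT ih =>
    have hE_T : DependsOn E (Set.Icc 1 T) := hE.mono (Set.Icc_subset_Icc_right hT)
    rw [← ih fun j hnj hjT => hK j hnj (hjT.trans T.le_succ), pr_chainJoint_succ ν K (hn.trans hT)]
    refine Finset.sum_congr rfl fun x _ => ?_
    simp only [update_eq_of_dependsOn_Icc hE_T]
    by_cases hx : E (fext T x) <;> simp [hx, hK (T + 1) (Nat.lt_succ_of_le hT) le_rfl]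

theorem pr_chainJoint_step {n T : ℕ} (hn : 1 ≤ n) (hnT : n < T)
    (hK : ∀ j, n < j → j ≤ T → ∀ a, ∑ b, K j a b = 1) {H : (ℕ → X) → Prop}
    (hH : DependsOn H (Set.Icc 1 n)) (b : X) :
    pr (chainJoint ν K T) (fun x => fext T x (n + 1) = b ∧ H (fext T x)) =
      ∑ a, pr (chainJoint ν K T) (fun x => fext T x n = a ∧ H (fext T x)) * K (n + 1) a b := by
  classical
  have hnext : DependsOn (fun x : ℕ → X => x (n + 1) = b ∧ H x) (Set.Icc 1 (n + 1)) := by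
    intro x x' h
    simp only [h (n + 1) ⟨by omega, le_rfl⟩, hH fun i hi => h i ⟨hi.1, hi.2.trans n.le_succ⟩]
  have hcurrent : ∀ a, DependsOn (fun x : ℕ → X => x n = a ∧ H x) (Set.Icc 1 n) := by
    intro a x x' h
    simp only [h n ⟨hn, le_rfl⟩, hH h]
  calc pr (chainJoint ν K T) (fun x => fext T x (n + 1) = b ∧ H (fext T x))
      = pr (chainJoint ν K (n + 1)) (fun x => fext (n + 1) x (n + 1) = b ∧ H (fext (n + 1) x)) :=
        pr_chainJoint_eq_of_dependsOn ν (hn.trans n.le_succ) hnT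
          (fun j hj => hK j (n.lt_succ_self.trans hj)) hnext
    _ = ∑ x, if H (fext n x) then chainJoint ν K n x * K (n + 1) (fext n x n) b else 0 := by
        rw [pr_chainJoint_succ ν K hn fun x => x (n + 1) = b ∧ H x]
        simp only [Function.update_self, update_eq_of_dependsOn_Icc hH]
        refine Finset.sum_congr rfl fun x _ => ?_
        by_cases hx : H (fext n x) <;> simp [hx]
    _ = ∑ a, pr (chainJoint ν K n) (fun x => fext n x n = a ∧ H (fext n x)) * K (n + 1) a b :=
        (sum_pr_fiber_mul _ (fun x => fext n x n) (fun x => H (fext n x))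
          fun a => K (n + 1) a b).symm
    _ = ∑ a, pr (chainJoint ν K T) (fun x => fext T x n = a ∧ H (fext T x)) * K (n + 1) a b := by
        simp only [pr_chainJoint_eq_of_dependsOn ν hn hnT.le hK (hcurrent _)]

theorem cpr_chainJoint_step {n T : ℕ} (hn : 1 ≤ n) (hnT : n < T)
    (hK : ∀ j, n < j → j ≤ T → ∀ a, ∑ b, K j a b = 1) {H : (ℕ → X) → Prop}
    (hH : DependsOn H (Set.Icc 1 n)) (b : X) :
    cpr (chainJoint ν K T) (fun x => fext T x (n + 1) = b) (fun x => H (fext T x)) =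
      ∑ a, cpr (chainJoint ν K T) (fun x => fext T x n = a) (fun x => H (fext T x)) *
        K (n + 1) a b := by
  simp only [cpr, pr_chainJoint_step ν hn hnT hK hH b, Finset.sum_div, div_mul_eq_mul_div]

end MarkovChain

section FanHMM

variable {S M : ℕ}

/-- Initial weights of the Markov chain of pairs `(z_j, y_j)` of a FAN-HMM:
`fanInit pi0 B1 (s, m) = P(z_1 = s, y_1 = m)`. -/
def fanInit (pi0 : Fin S → ℝ) (B1 : Fin S → Fin M → ℝ) (a : Fin S × Fin M) : ℝ :=
  pi0 a.1 * B1 a.1 a.2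

/-- Transition matrix of the Markov chain of pairs `(z_j, y_j)` of a FAN-HMM:
`fanKernel A B j (r, m') (s, m) = P(z_j = s, y_j = m | z_{j-1} = r, y_{j-1} = m')`. -/
def fanKernel (A : ℕ → Fin S → Fin S → Fin M → ℝ) (B : ℕ → Fin S → Fin M → Fin M → ℝ)
    (j : ℕ) (a b : Fin S × Fin M) : ℝ :=
  A j a.1 b.1 a.2 * B j b.1 b.2 a.2

theorem sum_fanKernel {A : ℕ → Fin S → Fin S → Fin M → ℝ} {B : ℕ → Fin S → Fin M → Fin M → ℝ}
    {j : ℕ} (hA : ∀ r m, ∑ s, A j r s m = 1) (hB : ∀ s m', ∑ m, B j s m m' = 1)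
    (a : Fin S × Fin M) : ∑ b, fanKernel A B j a b = 1 := by
  simp only [fanKernel, Fintype.sum_prod_type, ← Finset.mul_sum, hB, mul_one, hA]

variable [NeZero S] [NeZero M]

/-- The sequence of pairs `(z_j, y_j)` of a FAN-HMM trajectory; outside the times `1, …, T` it has
the default value of `fext`. -/
def fanPath (T : ℕ) (p : (Fin T → Fin S) × (Fin T → Fin M)) (j : ℕ) : Fin S × Fin M :=
  (fext T p.1 j, fext T p.2 j)

theorem fext_prodMk {T : ℕ} (p : (Fin T → Fin S) × (Fin T → Fin M)) :
    fext T (fun i => (p.1 i, p.2 i)) = fanPath T p := by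
  funext j
  by_cases h : 1 ≤ j ∧ j ≤ T
  · simp only [fext, fanPath, dif_pos h]
  · simp only [fext, fanPath, dif_neg h]
    rfl

variable (pi0 : Fin S → ℝ) (A : ℕ → Fin S → Fin S → Fin M → ℝ) (B1 : Fin S → Fin M → ℝ)
  (B : ℕ → Fin S → Fin M → Fin M → ℝ)

theorem chainJoint_fanKernel {T : ℕ} (p : (Fin T → Fin S) × (Fin T → Fin M)) :
    chainJoint (fanInit pi0 B1) (fanKernel A B) T (fun i => (p.1 i, p.2 i)) =
      fanJoint pi0 A B1 B T p := by
  simp only [chainJoint, fext_prodMk, fanPath, fanInit, fanKernel, fanJoint]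

theorem pr_fanJoint (T : ℕ) (E : (ℕ → Fin S × Fin M) → Prop) :
    pr (fanJoint pi0 A B1 B T) (fun p => E (fanPath T p)) =
      pr (chainJoint (fanInit pi0 B1) (fanKernel A B) T) (fun x => E (fext T x)) := by
  classical
  simp only [pr, ← chainJoint_fanKernel, ← fext_prodMk]
  exact (Equiv.arrowProdEquivProdArrow (Fin T) (fun _ => Fin S) fun _ => Fin M).symm.sum_comp
    (fun x => if E (fext T x) then chainJoint (fanInit pi0 B1) (fanKernel A B) T x else 0)

theorem cpr_fanJoint (T : ℕ) (E H : (ℕ → Fin S × Fin M) → Prop) :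
    cpr (fanJoint pi0 A B1 B T) (fun p => E (fanPath T p)) (fun p => H (fanPath T p)) =
      cpr (chainJoint (fanInit pi0 B1) (fanKernel A B) T)
        (fun x => E (fext T x)) (fun x => H (fext T x)) := by
  simp only [cpr, pr_fanJoint pi0 A B1 B T fun x => E x ∧ H x, pr_fanJoint]

variable {A B}

theorem cpr_fanJoint_step {n T : ℕ} (hn : 1 ≤ n) (hnT : n < T)
    (hA : ∀ j, n < j → j ≤ T → ∀ r m, ∑ s, A j r s m = 1)
    (hB : ∀ j, n < j → j ≤ T → ∀ s m', ∑ m, B j s m m' = 1)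
    {H : (ℕ → Fin S × Fin M) → Prop} (hH : DependsOn H (Set.Icc 1 n)) (s : Fin S) (m : Fin M) :
    cpr (fanJoint pi0 A B1 B T) (fun p => fext T p.1 (n + 1) = s ∧ fext T p.2 (n + 1) = m)
        (fun p => H (fanPath T p)) =
      ∑ r, ∑ m', cpr (fanJoint pi0 A B1 B T) (fun p => fext T p.1 n = r ∧ fext T p.2 n = m')
        (fun p => H (fanPath T p)) * A (n + 1) r s m' * B (n + 1) s m m' := by
  have hpair : ∀ j r m', cpr (fanJoint pi0 A B1 B T)
        (fun p => fext T p.1 j = r ∧ fext T p.2 j = m') (fun p => H (fanPath T p)) =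
      cpr (chainJoint (fanInit pi0 B1) (fanKernel A B) T)
        (fun x => fext T x j = (r, m')) (fun x => H (fext T x)) := by
    intro j r m'
    rw [← cpr_fanJoint pi0 A B1 B T (fun x => x j = (r, m')) H]
    simp only [fanPath, Prod.mk.injEq]
  have hK : ∀ j, n < j → j ≤ T → ∀ a, ∑ b, fanKernel A B j a b = 1 :=
    fun j hnj hjT => sum_fanKernel (hA j hnj hjT) (hB j hnj hjT)
  simp only [hpair, cpr_chainJoint_step _ hn hnT hK hH, Fintype.sum_prod_type, fanKernel, mul_assoc]

end FanHMM

theorem statement_8_general {S M : ℕ} [NeZero S] [NeZero M] {T t : ℕ} (ht : 2 ≤ t) (htT : t ≤ T)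
    (pi0 : Fin S → ℝ) {A : ℕ → Fin S → Fin S → Fin M → ℝ}
    (B1 : Fin S → Fin M → ℝ) {B : ℕ → Fin S → Fin M → Fin M → ℝ}
    (hA : ∀ j, t ≤ j → j ≤ T → ∀ r m, ∑ s, A j r s m = 1)
    (hB : ∀ j, t ≤ j → j ≤ T → ∀ s m', ∑ m, B j s m m' = 1)
    {H : (ℕ → Fin S × Fin M) → Prop} (hH : DependsOn H (Set.Icc 1 (t - 1)))
    {m₀ : Fin M} (hm₀ : ∀ x, H x → (x (t - 1)).2 = m₀)
    (_hpos : pr (fanJoint pi0 A B1 B T) (fun p => H (fanPath T p)) ≠ 0) :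
    let Efun : ℕ → Fin S → Fin M → ℝ := fun j s m =>
      cpr (fanJoint pi0 A B1 B T) (fun p => fext T p.1 j = s ∧ fext T p.2 j = m)
        (fun p => H (fanPath T p))
    (∀ s m, Efun t s m =
      (∑ r, cpr (fanJoint pi0 A B1 B T) (fun p => fext T p.1 (t - 1) = r)
        (fun p => H (fanPath T p)) * A t r s m₀) * B t s m m₀) ∧
    (∀ j, t ≤ j → j ≤ T → ∀ s m,
      Efun j s m = ∑ r, ∑ m', Efun (j - 1) r m' * A j r s m' * B j s m m') := by
  intro Efun
  have hrec : ∀ j, t ≤ j → j ≤ T → ∀ s m,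
      Efun j s m = ∑ r, ∑ m', Efun (j - 1) r m' * A j r s m' * B j s m m' := by
    intro j htj hjT s m
    obtain ⟨n, rfl⟩ : ∃ n, j = n + 1 := ⟨j - 1, by omega⟩
    exact cpr_fanJoint_step pi0 B1 (by omega) hjT (fun i hi => hA i (by omega))
      (fun i hi => hB i (by omega)) (hH.mono (Set.Icc_subset_Icc_right (by omega))) s m
  have hpinned : ∀ r m', Efun (t - 1) r m' = if m₀ = m' then
      cpr (fanJoint pi0 A B1 B T) (fun p => fext T p.1 (t - 1) = r) (fun p => H (fanPath T p))
      else 0 :=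
    fun r => cpr_and_eq_ite _ fun p => hm₀ (fanPath T p)
  refine ⟨fun s m => ?_, hrec⟩
  simp only [hrec t le_rfl htT, hpinned, ite_mul, zero_mul, Finset.sum_ite_eq, Finset.mem_univ,
    if_true, Finset.sum_mul]

/-- for a FAN-HMM, 2 ≤ t, k ≥ 1, t + k ≤ T, conditioning only on the
responses y_{1:t-1} (with P(y_{1:t-1}) > 0), the quantities
E_j(s, m) = P(z_j = s, y_j = m | y_{1:t-1}) satisfy
E_t(s, m) = (Σ_r ᾱ_{t-1}(r) A_t(r, s; y_{t-1})) B_t(s, m; y_{t-1}) and, for t < j ≤ t+k,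
E_j(s, m) = Σ_r Σ_{m'} E_{j-1}(r, m') A_j(r, s; m') B_j(s, m; m'); in particular
P(z_{t+k} = s, y_{t+k} = m | y_{1:t-1}) is computed by this recursion without enumerating
the intermediate response and state trajectories. -/
theorem statement_8 {S M : ℕ} [NeZero S] [NeZero M] (T t k : ℕ)
    (ht : 2 ≤ t) (hk : 1 ≤ k) (htk : t + k ≤ T)
    (pi0 : Fin S → ℝ) (A : ℕ → Fin S → Fin S → Fin M → ℝ)
    (B1 : Fin S → Fin M → ℝ) (B : ℕ → Fin S → Fin M → Fin M → ℝ) (y : ℕ → Fin M)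
    (hpi : (∀ s, 0 ≤ pi0 s) ∧ (∑ s, pi0 s) = 1)
    (hA : ∀ j, 2 ≤ j → j ≤ T → ∀ r m, (∀ s, 0 ≤ A j r s m) ∧ (∑ s, A j r s m) = 1)
    (hB1 : ∀ s, (∀ m, 0 ≤ B1 s m) ∧ (∑ m, B1 s m) = 1)
    (hB : ∀ j, 2 ≤ j → j ≤ T → ∀ s m', (∀ m, 0 ≤ B j s m m') ∧ (∑ m, B j s m m') = 1)
    (hpos : 0 < pr (fanJoint pi0 A B1 B T)
        (fun p => ∀ j, 1 ≤ j → j ≤ t - 1 → fext T p.2 j = y j)) :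
    let hist : (Fin T → Fin S) × (Fin T → Fin M) → Prop :=
      fun p => ∀ j, 1 ≤ j → j ≤ t - 1 → fext T p.2 j = y j
    let Efun : ℕ → Fin S → Fin M → ℝ := fun j s m =>
      cpr (fanJoint pi0 A B1 B T) (fun p => fext T p.1 j = s ∧ fext T p.2 j = m) hist
    (∀ (s : Fin S) (m : Fin M),
      Efun t s m =
        (∑ r, cpr (fanJoint pi0 A B1 B T) (fun p => fext T p.1 (t - 1) = r) hist *
            A t r s (y (t - 1))) * B t s m (y (t - 1))) ∧
    (∀ j, t < j → j ≤ t + k → ∀ (s : Fin S) (m : Fin M),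
      Efun j s m = ∑ r, ∑ m', Efun (j - 1) r m' * A j r s m' * B j s m m') := by
  intro hist Efun
  obtain ⟨hfirst, hrec⟩ := statement_8_general ht (by omega) pi0 B1
    (fun j htj hjT r m => (hA j (ht.trans htj) hjT r m).2)
    (fun j htj hjT s m' => (hB j (ht.trans htj) hjT s m').2)
    (dependsOn_forall_comp_eq (t - 1) Prod.snd y)
    (fun x hx => hx (t - 1) (by omega) le_rfl) hpos.ne'
  exact ⟨hfirst, fun j htj hjk => hrec j htj.le (hjk.trans htk)⟩
end
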